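/- Let p be an odd prime, let λ be a self-conjugate partition with p-core λ_(p) and p-cocore λ^[p], and let σ be an automorphism of ℚ̄ over ℚ that either is of σ_p-type or fixes every root of unity whose order is coprime to p. Then τ(λ,σ) = τ(λ_(p),σ)·τ(λ^[p],σ). -/

import Mathlib

open scoped BigOperators

/-- Removing a rim `p`-hook: `m ⊆ l`, the skew shape `l \ m` has `p` cells, and its cells
occupy `p` consecutive diagonals (contents `j − i`), one cell on each; this characterizes
rim hooks (border strips) among skew shapes. -/
def IsRimHookRemoval (p : ℕ) (l m : YoungDiagram) : Prop :=
  m.cells ⊆ l.cells ∧ (l.cells \ m.cells).card = p ∧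
  ∃ d0 : ℤ, (l.cells \ m.cells).image (fun c => (c.2 : ℤ) - (c.1 : ℤ)) =
    (Finset.range p).image (fun k : ℕ => d0 + (k : ℤ))

/-- A `p`-core: a partition admitting no rim `p`-hook removal. -/
def IsPCore (p : ℕ) (κ : YoungDiagram) : Prop := ∀ m, ¬ IsRimHookRemoval p κ m

/-- `κ` is the `p`-core of `l`. -/
def IsPCoreOf (p : ℕ) (l κ : YoungDiagram) : Prop :=
  Relation.ReflTransGen (IsRimHookRemoval p) l κ ∧ IsPCore p κ

/-- `l` has empty `p`-core. -/
def HasEmptyPCore (p : ℕ) (l : YoungDiagram) : Prop :=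
  Relation.ReflTransGen (IsRimHookRemoval p) l ⊥

/-- The β-set of first-column hook lengths of `l` using `N` rows. -/
def betaSet (l : YoungDiagram) (N : ℕ) : Finset ℕ :=
  (Finset.range N).image fun i => l.rowLen i + (N - 1 - i)

/-- The runner `r` of the `p`-abacus determined by a β-set `B`. -/
def runnerSet (p r : ℕ) (B : Finset ℕ) : Finset ℕ :=
  (B.filter fun x => x % p = r).image fun x => x / p

/-- Padding a β-set: `S ↦ {x + d : x ∈ S} ∪ {0, …, d − 1}`; two β-sets represent the same
partition iff they agree after padding. -/
def padBeta (S : Finset ℕ) (d : ℕ) : Finset ℕ := S.image (· + d) ∪ Finset.range d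

/-- `l` and `m` have the same `p`-quotient: for some common β-set size `N` divisible by `p`
(large enough for both), each runner of the `p`-abacus of `l` represents the same partition
as the corresponding runner for `m`. -/
def HasSamePQuotient (p : ℕ) (l m : YoungDiagram) : Prop :=
  ∃ N : ℕ, l.colLen 0 ≤ N ∧ m.colLen 0 ≤ N ∧ p ∣ N ∧
    ∀ r < p, ∃ d e2 : ℕ,
      padBeta (runnerSet p r (betaSet l N)) d = padBeta (runnerSet p r (betaSet m N)) e2

/-- `m` is the `p`-cocore of `l`: the unique partition with empty `p`-core and the same
`p`-quotient as `l`. -/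
def IsPCocoreOf (p : ℕ) (l m : YoungDiagram) : Prop :=
  HasEmptyPCore p m ∧ HasSamePQuotient p l m

/-- The Durfee number `𝔠(λ)`: the number of diagonal boxes of `λ`. -/
def durfee (l : YoungDiagram) : ℕ := (l.cells.filter fun c => c.1 = c.2).card

/-- The product of the diagonal hook lengths of a partition; the diagonal hook at `(i,i)`
has length `rowLen i + colLen i − 2i − 1`. -/
def diagHookProd (l : YoungDiagram) : ℤ :=
  ∏ c ∈ l.cells.filter (fun c => c.1 = c.2),
    ((l.rowLen c.1 + l.colLen c.1 - 2 * c.1 - 1 : ℕ) : ℤ)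

/-- The discriminant `E_λ = (−1)^((n−c)/2)·d₁⋯d_c` attached to a self-conjugate partition
`λ` of `n` with `c` diagonal hooks of lengths `d₁, …, d_c`. -/
def selfConjDisc (l : YoungDiagram) : ℤ :=
  (-1) ^ ((l.cells.card - durfee l) / 2) * diagHookProd l

/-- A fixed algebraic closure of `ℚ`. -/
abbrev Qbar := AlgebraicClosure ℚ

/-- `σ` is a `σ_p`-type automorphism of `ℚ̄`. -/
def IsSigmaPType (p : ℕ) (σ : Qbar ≃ₐ[ℚ] Qbar) : Prop :=
  (∀ (ζ : Qbar) (n : ℕ), 0 < n → Nat.Coprime n p → ζ ^ n = 1 → σ ζ = ζ ^ p) ∧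
  (∀ (ζ : Qbar) (k : ℕ), ζ ^ (p ^ k) = 1 → σ ζ = ζ)

namespace LW

/-- Number of elements of `B` that are at least `t`. -/
def F (B : Finset ℕ) (t : ℕ) : ℕ := (B.filter fun x => t ≤ x).card

lemma F_step (B : Finset ℕ) (x : ℕ) : F B x = F B (x + 1) + (if x ∈ B then 1 else 0) := by
  unfold F
  split_ifs with h
  · have : (B.filter fun y => x ≤ y) = insert x (B.filter fun y => x + 1 ≤ y) := by
      ext y; simp only [Finset.mem_filter, Finset.mem_insert]
      constructor
      · rintro ⟨h1, h2⟩
        by_cases hy : y = x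
        · exact Or.inl hy
        · exact Or.inr ⟨h1, by omega⟩
      · rintro (rfl | ⟨h1, h2⟩)
        · exact ⟨h, le_rfl⟩
        · exact ⟨h1, by omega⟩
    rw [this, Finset.card_insert_of_notMem]
    simp
  · congr 1
    apply Finset.filter_congr
    intro y hy
    constructor
    · intro h1
      rcases Nat.lt_or_ge x y with h2 | h2
      · exact h2
      · have : y = x := by omega
        subst this; exact absurd hy h
    · intro h1; omega

lemma F_le (B : Finset ℕ) (t : ℕ) : F B t ≤ B.card := Finset.card_filter_le _ _

lemma le_F (B : Finset ℕ) (t : ℕ) : B.card - t ≤ F B t := by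
  unfold F
  have h := Finset.card_filter_add_card_filter_not (s := B) (fun x => t ≤ x)
  have : (B.filter fun x => ¬ t ≤ x).card ≤ t := by
    calc _ ≤ (Finset.range t).card := Finset.card_le_card (by intro x; simp)
      _ = t := by simp
  omega

lemma eq_of_F {B C : Finset ℕ} (h : ∀ t, F B t = F C t) : B = C := by
  ext x
  have h1 := F_step B x
  have h2 := F_step C x
  rw [h x, h (x+1)] at h1
  by_cases hb : x ∈ B <;> by_cases hc : x ∈ C <;> simp [hb, hc] at * <;> omega

lemma F_anti (B : Finset ℕ) {s t : ℕ} (h : s ≤ t) : F B t ≤ F B s := by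
  unfold F
  apply Finset.card_le_card
  intro x; simp only [Finset.mem_filter]; rintro ⟨a, b⟩; exact ⟨a, by omega⟩

lemma F_succ_le (B : Finset ℕ) (t : ℕ) : F B t ≤ F B (t+1) + 1 := by
  have := F_step B t
  split_ifs at this <;> omega

lemma beta_lt (l : YoungDiagram) {N i i' : ℕ} (h : i < i') (h' : i' < N) :
    l.rowLen i' + (N - 1 - i') < l.rowLen i + (N - 1 - i) := by
  have := l.rowLen_anti i i' h.le
  omega

lemma beta_injOn (l : YoungDiagram) (N : ℕ) :
    Set.InjOn (fun i => l.rowLen i + (N - 1 - i)) (Finset.range N : Finset ℕ) := by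
  intro a ha b hb h
  simp only [Finset.coe_range, Set.mem_Iio] at ha hb h
  rcases lt_trichotomy a b with h1 | h1 | h1
  · have := beta_lt l h1 hb; omega
  · exact h1
  · have := beta_lt l h1 ha; omega

lemma card_beta (l : YoungDiagram) (N : ℕ) : (betaSet l N).card = N := by
  unfold betaSet
  rw [Finset.card_image_of_injOn (beta_injOn l N), Finset.card_range]

lemma mem_beta {l : YoungDiagram} {N x : ℕ} :
    x ∈ betaSet l N ↔ ∃ i < N, l.rowLen i + (N - 1 - i) = x := by
  simp [betaSet]

lemma fst_lt {l : YoungDiagram} {N : ℕ} (hN : l.colLen 0 ≤ N) {i j : ℕ} (h : (i, j) ∈ l) :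
    i < N := by
  have := YoungDiagram.mem_iff_lt_colLen.1 h
  have := l.colLen_anti 0 j (Nat.zero_le _)
  omega

lemma lt_F_beta (l : YoungDiagram) {N i : ℕ} (hi : i < N) (t : ℕ) :
    i < F (betaSet l N) t ↔ t ≤ l.rowLen i + (N - 1 - i) := by
  have hF : F (betaSet l N) t
      = ((Finset.range N).filter fun k => t ≤ l.rowLen k + (N - 1 - k)).card := by
    unfold F betaSet
    rw [Finset.filter_image, Finset.card_image_of_injOn]
    exact (beta_injOn l N).mono (by intro x; simp; tauto)
  rw [hF]
  constructor
  · intro h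
    by_contra hc
    have : ((Finset.range N).filter fun k => t ≤ l.rowLen k + (N - 1 - k)) ⊆ Finset.range i := by
      intro k
      simp only [Finset.mem_filter, Finset.mem_range]
      rintro ⟨h1, h2⟩
      by_contra hk
      rcases Nat.lt_or_ge i k with h3 | h3
      · have := beta_lt l h3 h1; omega
      · have : k = i := by omega
        subst this; omega
    have := Finset.card_le_card this
    simp at this; omega
  · intro h
    have : Finset.range (i+1) ⊆
        ((Finset.range N).filter fun k => t ≤ l.rowLen k + (N - 1 - k)) := by
      intro k
      simp only [Finset.mem_filter, Finset.mem_range]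
      intro hk
      refine ⟨by omega, ?_⟩
      rcases Nat.lt_or_ge k i with h3 | h3
      · have := beta_lt l h3 hi; omega
      · have : k = i := by omega
        subst this; omega
    have := Finset.card_le_card this
    simp at this; omega

lemma cell_iff (l : YoungDiagram) {N i j t : ℕ} (hi : i < N) (ht : t + i = j + N) :
    (i, j) ∈ l ↔ i < F (betaSet l N) t := by
  rw [lt_F_beta l hi, YoungDiagram.mem_iff_lt_rowLen]
  omega

lemma diag_card (l : YoungDiagram) {N : ℕ} (hN : l.colLen 0 ≤ N) (t : ℕ) :
    (l.cells.filter fun c => c.2 + N = t + c.1).card + (N - t) = F (betaSet l N) t := by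
  have h1 := F_le (betaSet l N) t
  have h2 := le_F (betaSet l N) t
  rw [card_beta] at h1 h2
  have : (l.cells.filter fun c => c.2 + N = t + c.1)
      = (Finset.Ico (N - t) (F (betaSet l N) t)).image (fun i => (i, t + i - N)) := by
    ext ⟨i, j⟩
    simp only [Finset.mem_filter, YoungDiagram.mem_cells, Finset.mem_image, Finset.mem_Ico,
      Prod.mk.injEq]
    constructor
    · rintro ⟨h3, h4⟩
      have hi := fst_lt hN h3
      have := (cell_iff l hi h4.symm).1 h3
      exact ⟨i, ⟨by omega, this⟩, rfl, by omega⟩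
    · rintro ⟨k, ⟨h3, h4⟩, rfl, h5⟩
      have : t + k = j + N := by omega
      exact ⟨(cell_iff l (by omega) this).2 h4, this.symm⟩
  rw [this, Finset.card_image_of_injective, Nat.card_Ico]
  · omega
  · intro a b h; simpa using congrArg Prod.fst h

lemma ext_beta {l m : YoungDiagram} {N : ℕ} (hl : l.colLen 0 ≤ N) (hm : m.colLen 0 ≤ N)
    (h : betaSet l N = betaSet m N) : l = m := by
  ext ⟨i, j⟩
  simp only [YoungDiagram.mem_cells]
  constructor
  · intro h1
    have hi := fst_lt hl h1
    have ht : (j + N - i) + i = j + N := by omega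
    rw [cell_iff m hi ht, ← h, ← cell_iff l hi ht]; exact h1
  · intro h1
    have hi := fst_lt hm h1
    have ht : (j + N - i) + i = j + N := by omega
    rw [cell_iff l hi ht, h, ← cell_iff m hi ht]; exact h1

/-- The Young diagram with a given beta set. -/
def ofBeta (B : Finset ℕ) (N : ℕ) : YoungDiagram where
  cells := (Finset.range N ×ˢ Finset.range (B.sup id + 1)).filter
    fun c => c.1 < F B (c.2 + N - c.1)
  isLowerSet := by
    rintro ⟨i, j⟩ ⟨i', j'⟩ hle h
    obtain ⟨h1, h2⟩ := Prod.mk_le_mk.1 hle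
    simp only [Finset.coe_filter, Finset.mem_product, Finset.mem_range, Set.mem_ofPred_eq] at h ⊢
    refine ⟨⟨by omega, by omega⟩, ?_⟩
    obtain ⟨⟨h3, h4⟩, h5⟩ := h
    have key : ∀ k t : ℕ, F B t ≤ F B (t + k) + k := by
      intro k
      induction k with
      | zero => intro t; simp
      | succ k ih =>
        intro t
        have := ih t
        have := F_succ_le B (t + k)
        have e : t + k + 1 = t + (k + 1) := by ring
        rw [e] at this
        omega
    have h6 := key (i - i') (j + N - i)
    have h7 : F B (j + N - i + (i - i')) ≤ F B (j' + N - i') := F_anti B (by omega)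
    omega

lemma mem_ofBeta {B : Finset ℕ} {N : ℕ} {i j : ℕ} :
    (i, j) ∈ ofBeta B N ↔ i < N ∧ i < F B (j + N - i) := by
  rw [← YoungDiagram.mem_cells]
  simp only [ofBeta, Finset.mem_filter, Finset.mem_product, Finset.mem_range]
  constructor
  · rintro ⟨⟨a, b⟩, c⟩; exact ⟨a, c⟩
  · rintro ⟨a, c⟩
    refine ⟨⟨a, ?_⟩, c⟩
    unfold F at c
    have : 0 < (B.filter fun x => j + N - i ≤ x).card := by omega
    obtain ⟨x, hx⟩ := Finset.card_pos.1 this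
    simp only [Finset.mem_filter] at hx
    have := Finset.le_sup (f := id) hx.1
    simp only [id] at this
    omega

lemma ofBeta_colLen (B : Finset ℕ) (N : ℕ) : (ofBeta B N).colLen 0 ≤ N := by
  by_contra h
  have : (N, 0) ∈ ofBeta B N := YoungDiagram.mem_iff_lt_colLen.2 (by omega)
  have := (mem_ofBeta.1 this).1
  omega

lemma beta_ofBeta {B : Finset ℕ} {N : ℕ} (hB : B.card = N) : betaSet (ofBeta B N) N = B := by
  apply eq_of_F
  intro t
  have h1 := F_le (betaSet (ofBeta B N) N) t
  have h2 := le_F (betaSet (ofBeta B N) N) t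
  have h3 := F_le B t
  have h4 := le_F B t
  rw [card_beta] at h1 h2
  rw [hB] at h3 h4
  have key : ∀ i, i < N → (i < F (betaSet (ofBeta B N) N) t ↔ i < F B t) := by
    intro i hi
    by_cases h : i < N - t
    · constructor <;> intro _ <;> omega
    · have e : t + i = (t + i - N) + N := by omega
      rw [← cell_iff (ofBeta B N) hi e, mem_ofBeta]
      have : t + i - N + N - i = t := by omega
      rw [this]; tauto
  apply le_antisymm
  · by_contra hc
    have := (key (F B t) (by omega)).1 (by omega)
    omega
  · by_contra hc
    have := (key (F (betaSet (ofBeta B N) N) t) (by omega)).2 (by omega)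
    omega

/-- Effect of a rim hook removal on the counting function. -/
lemma rim_F {p N : ℕ} (hp : 0 < p) {l m : YoungDiagram} (hN : l.colLen 0 ≤ N)
    (h : IsRimHookRemoval p l m) :
    m.colLen 0 ≤ N ∧ ∃ s : ℕ, 1 ≤ s ∧ ∀ t, F (betaSet l N) t
      = F (betaSet m N) t + if s ≤ t ∧ t < s + p then 1 else 0 := by
  obtain ⟨hsub, hcard, d0, him⟩ := h
  have hmN : m.colLen 0 ≤ N := by
    by_contra hc
    have h1 : (N, 0) ∈ m := YoungDiagram.mem_iff_lt_colLen.2 (by omega)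
    have h2 : (N, 0) ∈ l := hsub h1
    have := fst_lt hN h2
    omega
  refine ⟨hmN, ?_⟩
  have hinj : Set.InjOn (fun c : ℕ × ℕ => (c.2 : ℤ) - (c.1 : ℤ)) (l.cells \ m.cells : Finset _) := by
    rw [← Finset.card_image_iff, him, hcard, Finset.card_image_of_injective, Finset.card_range]
    intro a b hab
    simp only at hab
    omega
  have hd : 1 ≤ d0 + N := by
    have : d0 ∈ (Finset.range p).image (fun k : ℕ => d0 + (k : ℤ)) := by
      simp only [Finset.mem_image, Finset.mem_range]; exact ⟨0, hp, by simp⟩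
    rw [← him] at this
    simp only [Finset.mem_image, Finset.mem_sdiff, YoungDiagram.mem_cells] at this
    obtain ⟨⟨i, j⟩, ⟨h1, _⟩, h2⟩ := this
    have := fst_lt hN h1
    simp only at h2
    omega
  obtain ⟨s, hs⟩ : ∃ s : ℕ, (s : ℤ) = d0 + N := ⟨(d0 + N).toNat, by omega⟩
  refine ⟨s, by omega, fun t => ?_⟩
  rw [← diag_card l hN, ← diag_card m hmN]
  have hsplit : (l.cells.filter fun c => c.2 + N = t + c.1).card
      = (m.cells.filter fun c => c.2 + N = t + c.1).card
        + ((l.cells \ m.cells).filter fun c => c.2 + N = t + c.1).card := by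
    rw [← Finset.card_union_of_disjoint, ← Finset.filter_union, Finset.union_sdiff_of_subset hsub]
    exact Finset.disjoint_filter_filter Finset.disjoint_sdiff
  have hone : ((l.cells \ m.cells).filter fun c => c.2 + N = t + c.1).card
      = if s ≤ t ∧ t < s + p then 1 else 0 := by
    split_ifs with hst
    · rw [Finset.card_eq_one]
      have : (t : ℤ) - N ∈ (Finset.range p).image (fun k : ℕ => d0 + (k : ℤ)) := by
        simp only [Finset.mem_image, Finset.mem_range]
        exact ⟨t - s, by omega, by omega⟩
      rw [← him] at this
      obtain ⟨c, hc, hc2⟩ := Finset.mem_image.1 this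
      refine ⟨c, ?_⟩
      ext e
      simp only [Finset.mem_filter, Finset.mem_singleton]
      constructor
      · rintro ⟨he, he2⟩
        apply hinj he hc
        simp only at hc2 ⊢
        omega
      · rintro rfl
        exact ⟨hc, by omega⟩
    · rw [Finset.card_eq_zero, Finset.filter_eq_empty_iff]
      intro c hc hct
      have : (c.2 : ℤ) - c.1 ∈ (l.cells \ m.cells).image (fun c => (c.2 : ℤ) - (c.1 : ℤ)) :=
        Finset.mem_image_of_mem (fun c : ℕ × ℕ => (c.2 : ℤ) - (c.1 : ℤ)) hc
      rw [him] at this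
      simp only [Finset.mem_image, Finset.mem_range] at this
      obtain ⟨k, hk, hk2⟩ := this
      omega
  omega

lemma rim_beta {p N : ℕ} (hp : 0 < p) {l m : YoungDiagram} (hN : l.colLen 0 ≤ N)
    (h : IsRimHookRemoval p l m) :
    m.colLen 0 ≤ N ∧ ∃ (C : Finset ℕ) (x : ℕ), x ∉ C ∧ x + p ∉ C ∧
      betaSet l N = insert (x + p) C ∧ betaSet m N = insert x C := by
  obtain ⟨hm, s, hs, hF⟩ := rim_F hp hN h
  refine ⟨hm, (betaSet l N).erase (s - 1 + p), s - 1, ?_⟩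
  have key : ∀ x, ((if x ∈ betaSet l N then 1 else 0) + (if s ≤ x + 1 ∧ x + 1 < s + p then 1 else 0)
      = (if x ∈ betaSet m N then 1 else 0) + (if s ≤ x ∧ x < s + p then 1 else 0)) := by
    intro x
    have h1 := F_step (betaSet l N) x
    have h2 := F_step (betaSet m N) x
    have h3 := hF x
    have h4 := hF (x + 1)
    omega
  have k1 : s - 1 + p ∈ betaSet l N ∧ s - 1 + p ∉ betaSet m N := by
    have := key (s - 1 + p)
    rw [if_neg (c := s ≤ s - 1 + p + 1 ∧ _) (by omega),
      if_pos (c := s ≤ s - 1 + p ∧ _) (by omega)] at this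
    by_cases a : s - 1 + p ∈ betaSet l N <;> by_cases b : s - 1 + p ∈ betaSet m N <;>
      simp [a, b] at this ⊢
  have k2 : s - 1 ∉ betaSet l N ∧ s - 1 ∈ betaSet m N := by
    have := key (s - 1)
    rw [if_pos (c := s ≤ s - 1 + 1 ∧ _) (by omega),
      if_neg (c := s ≤ s - 1 ∧ _) (by omega)] at this
    by_cases a : s - 1 ∈ betaSet l N <;> by_cases b : s - 1 ∈ betaSet m N <;>
      simp [a, b] at this ⊢
  have k3 : ∀ x, x ≠ s - 1 → x ≠ s - 1 + p → (x ∈ betaSet l N ↔ x ∈ betaSet m N) := by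
    intro x h1 h2
    have := key x
    have e : (s ≤ x + 1 ∧ x + 1 < s + p) ↔ (s ≤ x ∧ x < s + p) := by omega
    simp only [e] at this
    by_cases a : x ∈ betaSet l N <;> by_cases b : x ∈ betaSet m N <;>
      simp [a, b] at this ⊢ 
  refine ⟨fun hh => k2.1 (Finset.mem_of_mem_erase hh), by simp, (Finset.insert_erase k1.1).symm, ?_⟩
  ext x
  simp only [Finset.mem_insert, Finset.mem_erase]
  by_cases h1 : x = s - 1
  · subst h1; simp [k2.2]
  · by_cases h2 : x = s - 1 + p
    · subst h2; simp [k1.2]; omega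
    · simp [h1, h2, k3 x h1 h2]

/-- Moving a bead down gives a rim hook removal. -/
lemma core_beta {p N : ℕ} {κ : YoungDiagram} (hN : κ.colLen 0 ≤ N) (h : IsPCore p κ)
    (hp : 0 < p) {x : ℕ} (hx : x + p ∈ betaSet κ N) : x ∈ betaSet κ N := by
  by_contra hc
  set B := betaSet κ N with hB
  set C := insert x (B.erase (x + p)) with hC
  have hxe : x ∉ B.erase (x + p) := fun hh => hc (Finset.mem_of_mem_erase hh)
  have hCc : C.card = N := by
    rw [hC, Finset.card_insert_of_notMem hxe, Finset.card_erase_of_mem hx, card_beta]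
    have : 0 < B.card := Finset.card_pos.2 ⟨_, hx⟩
    rw [card_beta] at this; omega
  have hF : ∀ t, F B t = F C t + if x + 1 ≤ t ∧ t < x + 1 + p then 1 else 0 := by
    intro t
    unfold F
    have e : B = insert (x + p) (B.erase (x + p)) := (Finset.insert_erase hx).symm
    rw [hC, e, Finset.erase_insert (by simp), Finset.filter_insert, Finset.filter_insert]
    have n1 : x + p ∉ (B.erase (x + p)).filter (fun y => t ≤ y) := by simp
    have n2 : x ∉ (B.erase (x + p)).filter (fun y => t ≤ y) := by
      simp only [Finset.mem_filter]; exact fun hh => hxe hh.1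
    split_ifs <;> (try rw [Finset.card_insert_of_notMem n1]) <;>
      (try rw [Finset.card_insert_of_notMem n2]) <;> omega
  set m := ofBeta C N with hm
  have hmN : m.colLen 0 ≤ N := ofBeta_colLen C N
  have hmB : betaSet m N = C := beta_ofBeta hCc
  have hsub : m.cells ⊆ κ.cells := by
    rintro ⟨i, j⟩ hij
    rw [YoungDiagram.mem_cells] at hij ⊢
    have hi := fst_lt hmN hij
    have ht : (j + N - i) + i = j + N := by omega
    rw [cell_iff _ hi ht] at hij ⊢
    rw [hmB] at hij
    rw [← hB, hF]; omega
  have hone : ∀ t, ((κ.cells \ m.cells).filter fun c => c.2 + N = t + c.1).card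
      = if x + 1 ≤ t ∧ t < x + 1 + p then 1 else 0 := by
    intro t
    have hsplit : (κ.cells.filter fun c => c.2 + N = t + c.1).card
      = (m.cells.filter fun c => c.2 + N = t + c.1).card
        + ((κ.cells \ m.cells).filter fun c => c.2 + N = t + c.1).card := by
      rw [← Finset.card_union_of_disjoint, ← Finset.filter_union,
        Finset.union_sdiff_of_subset hsub]
      exact Finset.disjoint_filter_filter Finset.disjoint_sdiff
    have h1 := diag_card κ hN t
    have h2 := diag_card m hmN t
    have h3 := hF t
    rw [hmB] at h2
    rw [← hB] at h1
    omega
  have him : (κ.cells \ m.cells).image (fun c => (c.2 : ℤ) - (c.1 : ℤ)) =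
    (Finset.range p).image (fun k : ℕ => ((x : ℤ) + 1 - N) + (k : ℤ)) := by
    ext z
    simp only [Finset.mem_image, Finset.mem_range]
    constructor
    · rintro ⟨⟨i, j⟩, hij, rfl⟩
      have hi := fst_lt (i := i) (j := j) hN (by
        simpa using (Finset.mem_sdiff.1 hij).1)
      have h1 := hone (j + N - i)
      have h2 : 0 < ((κ.cells \ m.cells).filter fun c => c.2 + N = (j + N - i) + c.1).card :=
        Finset.card_pos.2 ⟨(i, j), Finset.mem_filter.2 ⟨hij, by simp only; omega⟩⟩
      rw [h1] at h2
      split_ifs at h2 with h3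
      · exact ⟨j + N - i - (x + 1), by omega, by simp only; omega⟩
      · omega
    · rintro ⟨k, hk, rfl⟩
      have h1 := hone (x + 1 + k)
      rw [if_pos (by omega)] at h1
      obtain ⟨c, hc⟩ := Finset.card_pos.1 (lt_of_lt_of_eq Nat.one_pos h1.symm)
      rw [Finset.mem_filter] at hc
      exact ⟨c, hc.1, by have := hc.2; omega⟩
  refine h m ⟨hsub, ?_, _, him⟩
  have hinj : Set.InjOn (fun c : ℕ × ℕ => (c.2 : ℤ) - (c.1 : ℤ))
      (κ.cells \ m.cells : Finset _) := by
    rintro ⟨i, j⟩ h1 ⟨i', j'⟩ h2 h3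
    have hi := fst_lt (i := i) (j := j) hN (by
        simpa using (Finset.mem_sdiff.1 h1).1)
    simp only at h3
    have h4 : ((κ.cells \ m.cells).filter fun c => c.2 + N = (j + N - i) + c.1).card ≤ 1 := by
      rw [hone]; split_ifs <;> omega
    exact Finset.card_le_one.1 h4 (i, j) (Finset.mem_filter.2 ⟨h1, by simp only; omega⟩)
      (i', j') (Finset.mem_filter.2 ⟨h2, by simp only; omega⟩)
  rw [← Finset.card_image_of_injOn hinj, him, Finset.card_image_of_injective, Finset.card_range]
  intro a b hab
  simp only at hab
  omega

/-- number of beads on runner `r` -/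
def cnt (p r : ℕ) (B : Finset ℕ) : ℕ := (B.filter fun x => x % p = r).card

lemma rim_cnt {p N : ℕ} (hp : 0 < p) {l m : YoungDiagram} (hN : l.colLen 0 ≤ N)
    (h : Relation.ReflTransGen (IsRimHookRemoval p) l m) :
    m.colLen 0 ≤ N ∧ ∀ r, cnt p r (betaSet m N) = cnt p r (betaSet l N) := by
  induction h with
  | refl => exact ⟨hN, fun _ => rfl⟩
  | tail _ h ih =>
    obtain ⟨h1, h2⟩ := ih
    obtain ⟨h3, C, x, hx, hxp, e1, e2⟩ := rim_beta hp h1 h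
    refine ⟨h3, fun r => ?_⟩
    rw [← h2 r, e1, e2]
    unfold cnt
    rw [Finset.filter_insert, Finset.filter_insert, Nat.add_mod_right]
    split_ifs
    · rw [Finset.card_insert_of_notMem (by simp [hx]), Finset.card_insert_of_notMem (by simp [hxp])]
    · rfl

lemma beta_bot (N : ℕ) : betaSet ⊥ N = Finset.range N := by
  have h0 : ∀ i, (⊥ : YoungDiagram).rowLen i = 0 := by
    intro i
    by_contra h
    have : (i, 0) ∈ (⊥ : YoungDiagram) := YoungDiagram.mem_iff_lt_rowLen.2 (by omega)
    simp at this
  ext x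
  rw [mem_beta, Finset.mem_range]
  simp only [h0]
  constructor
  · rintro ⟨i, hi, rfl⟩; omega
  · intro hx; exact ⟨N - 1 - x, by omega, by omega⟩

end LW
namespace LW

/-- Beta set extended by all negative integers. -/
def ext (S : Finset ℕ) (z : ℤ) : Prop := z < 0 ∨ (0 ≤ z ∧ z.toNat ∈ S)

lemma ext_nat {S : Finset ℕ} {k : ℕ} : ext S (k : ℤ) ↔ k ∈ S := by
  simp [ext]

lemma ext_neg {S : Finset ℕ} {z : ℤ} (h : z < 0) : ext S z := Or.inl h

/-- Symmetry of a beta set of a self-conjugate partition. -/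
def Sym (N : ℕ) (A : Finset ℕ) : Prop := ∀ z : ℤ, ext A z ↔ ¬ ext A (2 * N - 1 - z)

lemma Sym.lt {N : ℕ} {A : Finset ℕ} (h : Sym N A) {x : ℕ} (hx : x ∈ A) : x < 2 * N := by
  by_contra hc
  exact (h x).1 (ext_nat.2 hx) (ext_neg (by omega))

lemma Sym.mem {N : ℕ} {A : Finset ℕ} (h : Sym N A) {x : ℕ} (hx : x < 2 * N) :
    x ∈ A ↔ 2 * N - 1 - x ∉ A := by
  have := h x
  rw [ext_nat] at this
  rw [this, ← ext_nat]
  have e : ((2 * N - 1 - x : ℕ) : ℤ) = 2 * N - 1 - x := by omega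
  rw [e]

lemma sym_of {N : ℕ} {A : Finset ℕ} (h : ∀ x ∈ A, x < 2 * N)
    (h2 : ∀ x < 2 * N, x ∈ A ↔ 2 * N - 1 - x ∉ A) : Sym N A := by
  intro z
  by_cases hz : z < 0
  · refine ⟨fun _ hc => ?_, fun _ => ext_neg hz⟩
    obtain ⟨k, hk⟩ : ∃ k : ℕ, (k : ℤ) = 2 * N - 1 - z := ⟨(2 * N - 1 - z).toNat, by omega⟩
    rw [← hk, ext_nat] at hc
    have := h k hc
    omega
  · obtain ⟨k, rfl⟩ : ∃ k : ℕ, (k : ℤ) = z := ⟨z.toNat, by omega⟩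
    rw [ext_nat]
    by_cases hk : k < 2 * N
    · rw [h2 k hk, ← ext_nat]
      have e : ((2 * N - 1 - k : ℕ) : ℤ) = 2 * N - 1 - k := by omega
      rw [e]
    · refine ⟨fun hh => absurd (h k hh) hk, fun hh => absurd (ext_neg (by omega)) hh⟩

lemma beta_transpose {l : YoungDiagram} {N : ℕ} (hc : l.colLen 0 ≤ N) (hr : l.rowLen 0 ≤ N)
    {x : ℕ} (hx : x < 2 * N) :
    x ∈ betaSet l.transpose N ↔ 2 * N - 1 - x ∉ betaSet l N := by
  have hrow : ∀ i, l.rowLen i ≤ N := fun i => (l.rowLen_anti 0 i (Nat.zero_le _)).trans hr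
  have hcol : ∀ i, l.colLen i ≤ N := fun i => (l.colLen_anti 0 i (Nat.zero_le _)).trans hc
  set U := (betaSet l.transpose N).image (fun y => 2 * N - 1 - y) with hU
  have ht : ∀ y ∈ betaSet l.transpose N, y < 2 * N := by
    intro y hy
    obtain ⟨j, hj, rfl⟩ := mem_beta.1 hy
    rw [YoungDiagram.rowLen_transpose]
    have := hcol j; omega
  have hUc : U.card = N := by
    rw [hU, Finset.card_image_of_injOn, card_beta]
    intro a ha b hb hab
    have := ht a ha; have := ht b hb
    simp only at hab; omega
  have hdisj : Disjoint (betaSet l N) U := by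
    rw [Finset.disjoint_left]
    intro y hy hyU
    obtain ⟨i, hi, rfl⟩ := mem_beta.1 hy
    rw [hU, Finset.mem_image] at hyU
    obtain ⟨w, hw, hw2⟩ := hyU
    obtain ⟨j, hj, rfl⟩ := mem_beta.1 hw
    rw [YoungDiagram.rowLen_transpose] at hw2
    have h1 := hrow i
    have h2 := hcol j
    by_cases hm : (i, j) ∈ l
    · have := YoungDiagram.mem_iff_lt_rowLen.1 hm
      have := YoungDiagram.mem_iff_lt_colLen.1 hm
      omega
    · have := mt YoungDiagram.mem_iff_lt_rowLen.2 hm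
      have := mt YoungDiagram.mem_iff_lt_colLen.2 hm
      omega
  have hun : betaSet l N ∪ U = Finset.range (2 * N) := by
    apply Finset.eq_of_subset_of_card_le
    · intro y hy
      rw [Finset.mem_range]
      rcases Finset.mem_union.1 hy with h | h
      · obtain ⟨i, hi, rfl⟩ := mem_beta.1 h
        have := hrow i; omega
      · rw [hU, Finset.mem_image] at h
        obtain ⟨w, hw, rfl⟩ := h
        have := ht w hw; omega
    · rw [Finset.card_union_of_disjoint hdisj, hUc, card_beta, Finset.card_range]; omega
  constructor
  · intro h h2
    exact Finset.disjoint_left.1 hdisj h2 (Finset.mem_image.2 ⟨x, h, rfl⟩)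
  · intro h
    have : 2 * N - 1 - x ∈ betaSet l N ∪ U := by rw [hun, Finset.mem_range]; omega
    rcases Finset.mem_union.1 this with h1 | h1
    · exact absurd h1 h
    · rw [hU, Finset.mem_image] at h1
      obtain ⟨w, hw, hw2⟩ := h1
      have := ht w hw
      have : w = x := by omega
      rwa [← this]

lemma sym_of_sc {l : YoungDiagram} {N : ℕ} (hc : l.colLen 0 ≤ N) (h : l.transpose = l) :
    Sym N (betaSet l N) := by
  have hr : l.rowLen 0 ≤ N := by rw [← h, YoungDiagram.rowLen_transpose]; exact hc
  apply sym_of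
  · intro x hx
    obtain ⟨i, hi, rfl⟩ := mem_beta.1 hx
    have := l.rowLen_anti 0 i (Nat.zero_le _)
    omega
  · intro x hx
    have := beta_transpose hc hr hx
    rwa [h] at this

lemma sc_of_sym {l : YoungDiagram} {N : ℕ} (hc : l.colLen 0 ≤ N) (h : Sym N (betaSet l N)) :
    l.transpose = l := by
  have hr : l.rowLen 0 ≤ N := by
    rcases Nat.eq_zero_or_pos N with h0 | h0
    · by_contra hcon
      have : (0, 0) ∈ l := YoungDiagram.mem_iff_lt_rowLen.2 (by omega)
      have := fst_lt hc this
      omega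
    · have := h.lt (mem_beta.2 ⟨0, h0, rfl⟩)
      omega
  have hr' : l.transpose.colLen 0 ≤ N := by rwa [YoungDiagram.colLen_transpose]
  apply ext_beta hr' hc
  ext x
  by_cases hx : x < 2 * N
  · rw [beta_transpose hc hr hx, h.mem hx]
  · constructor
    · intro h1
      obtain ⟨i, hi, rfl⟩ := mem_beta.1 h1
      rw [YoungDiagram.rowLen_transpose] at hx
      have := l.colLen_anti 0 i (Nat.zero_le _)
      omega
    · intro h1; exact absurd (h.lt h1) hx

lemma mem_runner {p r k : ℕ} (hr : r < p) {A : Finset ℕ} :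
    k ∈ runnerSet p r A ↔ p * k + r ∈ A := by
  unfold runnerSet
  simp only [Finset.mem_image, Finset.mem_filter]
  constructor
  · rintro ⟨x, ⟨h1, h2⟩, rfl⟩
    rw [← h2, Nat.div_add_mod]; exact h1
  · intro h
    refine ⟨_, ⟨h, ?_⟩, ?_⟩
    · rw [Nat.mul_add_mod, Nat.mod_eq_of_lt hr]
    · rw [Nat.mul_add_div (by omega), Nat.div_eq_of_lt hr, Nat.add_zero]

lemma ext_runner {p r : ℕ} (hr : r < p) {A : Finset ℕ} (z : ℤ) :
    ext (runnerSet p r A) z ↔ ext A (p * z + r) := by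
  by_cases hz : z < 0
  · refine ⟨fun _ => ext_neg ?_, fun _ => ext_neg hz⟩
    have : (p : ℤ) * z ≤ p * (-1) := by
      apply mul_le_mul_of_nonneg_left <;> omega
    omega
  · obtain ⟨k, rfl⟩ : ∃ k : ℕ, (k : ℤ) = z := ⟨z.toNat, by omega⟩
    rw [ext_nat, mem_runner hr]
    have : (p : ℤ) * k + r = ((p * k + r : ℕ) : ℤ) := by push_cast; ring
    rw [this, ext_nat]

lemma runner_injOn (p r : ℕ) (A : Finset ℕ) :
    Set.InjOn (fun x => x / p) (A.filter fun x => x % p = r : Finset ℕ) := by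
  intro a ha b hb h
  simp only [Finset.coe_filter, Set.mem_ofPred_eq] at ha hb h
  rw [← Nat.div_add_mod a p, ← Nat.div_add_mod b p, ha.2, hb.2, h]

lemma card_runner (p r : ℕ) (A : Finset ℕ) : (runnerSet p r A).card = cnt p r A := by
  unfold runnerSet cnt
  exact Finset.card_image_of_injOn (runner_injOn p r A)

lemma mem_pad {S : Finset ℕ} {d w : ℕ} : w ∈ padBeta S d ↔ ext S ((w : ℤ) - d) := by
  unfold padBeta
  simp only [Finset.mem_union, Finset.mem_image, Finset.mem_range]
  constructor
  · rintro (⟨a, ha, rfl⟩ | h)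
    · have : ((a + d : ℕ) : ℤ) - d = a := by push_cast; ring
      rw [this, ext_nat]; exact ha
    · exact ext_neg (by omega)
  · intro h
    by_cases hw : w < d
    · exact Or.inr hw
    · left
      have : (w : ℤ) - d = ((w - d : ℕ) : ℤ) := by omega
      rw [this, ext_nat] at h
      exact ⟨w - d, h, by omega⟩

lemma ext_pad {S T : Finset ℕ} {d e : ℕ} (h : padBeta S d = padBeta T e) (z : ℤ) :
    ext S z ↔ ext T (z + d - e) := by
  by_cases hz : z + d < 0
  · exact ⟨fun _ => ext_neg (by omega), fun _ => ext_neg (by omega)⟩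
  · obtain ⟨w, hw⟩ : ∃ w : ℕ, (w : ℤ) = z + d := ⟨(z + d).toNat, by omega⟩
    have h1 : w ∈ padBeta S d ↔ w ∈ padBeta T e := by rw [h]
    rw [mem_pad, mem_pad, hw] at h1
    rwa [add_sub_cancel_right] at h1

lemma pad_disj (S : Finset ℕ) (d : ℕ) : Disjoint (S.image (· + d)) (Finset.range d) := by
  rw [Finset.disjoint_left]
  intro x hx
  obtain ⟨a, _, rfl⟩ := Finset.mem_image.1 hx
  simp

lemma card_pad (S : Finset ℕ) (d : ℕ) : (padBeta S d).card = S.card + d := by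
  unfold padBeta
  rw [Finset.card_union_of_disjoint (pad_disj S d),
    Finset.card_image_of_injective _ (add_left_injective d), Finset.card_range]

lemma pad_range (n d : ℕ) : padBeta (Finset.range n) d = Finset.range (n + d) := by
  ext w
  unfold padBeta
  simp only [Finset.mem_union, Finset.mem_image, Finset.mem_range]
  constructor
  · rintro (⟨a, ha, rfl⟩ | h) <;> omega
  · intro h
    by_cases hw : w < d
    · exact Or.inr hw
    · exact Or.inl ⟨w - d, by omega, by omega⟩

lemma prod_pad {G : ℕ → ℤˣ} {ε : ℤˣ} (hG : ∀ k, G (k + 1) = ε * G k) (S : Finset ℕ) (d : ℕ) :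
    ∏ x ∈ padBeta S d, G x = ε ^ (d * S.card) * (∏ x ∈ S, G x) * ∏ x ∈ Finset.range d, G x := by
  have hd : ∀ k, G (k + d) = ε ^ d * G k := by
    intro k
    induction d with
    | zero => simp
    | succ d ih => rw [← add_assoc, hG, ih, pow_succ', mul_assoc]
  unfold padBeta
  rw [Finset.prod_union (pad_disj S d), Finset.prod_image (by intro a _ b _ h; simpa using h)]
  simp only [hd, Finset.prod_mul_distrib, Finset.prod_const, pow_mul]

lemma runner_prod {G : ℕ → ℤˣ} {ε : ℤˣ} (hG : ∀ k, G (k + 1) = ε * G k) {S T : Finset ℕ}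
    {d e : ℕ} (h : padBeta S d = padBeta T e) :
    (∏ x ∈ S, G x) * ∏ x ∈ T, G x
      = (∏ x ∈ Finset.range S.card, G x) * ∏ x ∈ Finset.range T.card, G x := by
  have hc : S.card + d = T.card + e := by rw [← card_pad, ← card_pad, h]
  have h1 := prod_pad hG S d
  have h2 := prod_pad hG T e
  have h3 := prod_pad hG (Finset.range S.card) d
  have h4 := prod_pad hG (Finset.range T.card) e
  rw [pad_range] at h3 h4
  rw [← hc] at h4
  rw [h, h2] at h1
  rw [h4] at h3
  simp only [Finset.card_range] at h3
  generalize (∏ x ∈ S, G x) = a at *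
  generalize (∏ x ∈ T, G x) = b at *
  generalize (∏ x ∈ Finset.range S.card, G x) = a0 at *
  generalize (∏ x ∈ Finset.range T.card, G x) = b0 at *
  generalize (∏ x ∈ Finset.range d, G x) = u at *
  generalize (∏ x ∈ Finset.range e, G x) = v at *
  generalize ε ^ (d * S.card) = s at *
  generalize ε ^ (e * T.card) = t at *
  clear h2 h4
  rcases Int.units_eq_one_or a with rfl | rfl <;> rcases Int.units_eq_one_or b with rfl | rfl <;>
  rcases Int.units_eq_one_or a0 with rfl | rfl <;> rcases Int.units_eq_one_or b0 with rfl | rfl <;>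
  simp_all

/-- The product over the positive beads. -/
def P (N : ℕ) (g : ℤ → ℤˣ) (A : Finset ℕ) : ℤˣ := ∏ x ∈ A.filter (fun x => N ≤ x), g ((x : ℤ) - N)

/-- The product over all beads on small runners. -/
def Q (p h N : ℕ) (g : ℤ → ℤˣ) (A : Finset ℕ) : ℤˣ :=
  ∏ x ∈ A.filter (fun x => x % p < h), g ((x : ℤ) - N)

lemma Q_eq {p h N : ℕ} (g : ℤ → ℤˣ) (A : Finset ℕ) :
    Q p h N g A = ∏ r ∈ Finset.range h, ∏ k ∈ runnerSet p r A, g (((p * k + r : ℕ) : ℤ) - N) := by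
  unfold Q
  rw [← Finset.prod_fiberwise_of_maps_to (t := Finset.range h) (g := fun x => x % p)]
  · apply Finset.prod_congr rfl
    intro r hr
    unfold runnerSet
    rw [Finset.prod_image (runner_injOn p r A), Finset.filter_filter]
    have : (A.filter fun x => x % p < h ∧ x % p = r) = A.filter fun x => x % p = r := by
      apply Finset.filter_congr
      intro x _
      rw [Finset.mem_range] at hr
      omega
    rw [this]
    apply Finset.prod_congr rfl
    intro x hx
    rw [Finset.mem_filter] at hx
    congr 3
    rw [← hx.2, Nat.div_add_mod]
  · intro x hx
    simpa using (Finset.mem_filter.1 hx).2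

lemma mod_reflect {p K x : ℕ} (hp : 0 < p) (hx : x < 2 * (p * K)) :
    (2 * (p * K) - 1 - x) % p = p - 1 - x % p := by
  have h1 := Nat.div_add_mod x p
  have h2 := Nat.mod_lt x hp
  have h3 : x / p < 2 * K := by
    rw [Nat.div_lt_iff_lt_mul hp]; linarith
  have e : 2 * (p * K) - 1 - x = p * (2 * K - 1 - x / p) + (p - 1 - x % p) := by
    obtain ⟨c, hc⟩ : ∃ c, 2 * K = x / p + 1 + c := ⟨2 * K - (x / p + 1), by omega⟩
    have h5 : 2 * K - 1 - x / p = c := by omega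
    have h6 : 2 * (p * K) = p * (x / p) + p + p * c := by
      calc 2 * (p * K) = p * (2 * K) := by ring
        _ = _ := by rw [hc]; ring
    rw [h5, h6]
    omega
  rw [e, Nat.mul_add_mod, Nat.mod_eq_of_lt (by omega)]

lemma P_eq {h K : ℕ} {g : ℤ → ℤˣ} (hg : ∀ b, g (-1 - b) = g b) {A : Finset ℕ}
    {p : ℕ} (hp : p = 2 * h + 1) (hA : Sym (p * K) A) :
    P (p * K) g A = Q p h (p * K) g A * Q p h (p * K) g (Finset.range (p * K))
      * ∏ x ∈ A.filter (fun x => p * K ≤ x ∧ x % p = h), g ((x : ℤ) - (p * K : ℕ)) := by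
  have hp0 : 0 < p := by omega
  set N := p * K with hN
  set f : ℕ → ℤˣ := fun x => g ((x : ℤ) - N) with hf
  have hgt : ∏ x ∈ A.filter (fun x => N ≤ x ∧ h < x % p), f x
      = ∏ y ∈ (Finset.range N).filter (fun y => y ∉ A ∧ y % p < h), f y := by
    apply Finset.prod_nbij' (fun x => 2 * N - 1 - x) (fun x => 2 * N - 1 - x)
    · intro x hx
      simp only [Finset.mem_filter, Finset.mem_range] at hx ⊢
      have h1 := hA.lt hx.1
      refine ⟨by omega, (hA.mem h1).1 hx.1, ?_⟩
      rw [hN, mod_reflect hp0 h1]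
      have := Nat.mod_lt x hp0
      omega
    · intro y hy
      simp only [Finset.mem_filter, Finset.mem_range] at hy ⊢
      have h1 : y < 2 * N := by omega
      have h2 := mt (hA.mem h1).2 hy.2.1
      refine ⟨not_not.1 h2, by omega, ?_⟩
      rw [hN, mod_reflect hp0 h1]
      have := Nat.mod_lt y hp0
      omega
    · intro x hx
      simp only [Finset.mem_filter] at hx
      have h1 := hA.lt hx.1
      omega
    · intro y hy
      simp only [Finset.mem_filter, Finset.mem_range] at hy
      omega
    · intro x hx
      simp only [Finset.mem_filter] at hx
      have h1 := hA.lt hx.1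
      simp only [hf]
      rw [← hg]
      congr 1
      omega
  have hP : P N g A = (∏ x ∈ A.filter (fun x => N ≤ x ∧ x % p < h), f x)
      * (∏ x ∈ A.filter (fun x => N ≤ x ∧ h < x % p), f x)
      * ∏ x ∈ A.filter (fun x => N ≤ x ∧ x % p = h), f x := by
    unfold P
    rw [← Finset.prod_filter_mul_prod_filter_not _ (fun x => x % p = h), mul_comm]
    rw [← Finset.prod_filter_mul_prod_filter_not (Finset.filter (fun x => ¬ x % p = h) _)
      (fun x => x % p < h)]
    simp only [Finset.filter_filter]
    congr 2
    · apply Finset.prod_congr _ (fun _ _ => rfl)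
      apply Finset.filter_congr; intro x _; omega
    · apply Finset.prod_congr _ (fun _ _ => rfl)
      apply Finset.filter_congr; intro x _; omega
  have hQ : Q p h N g A = (∏ x ∈ A.filter (fun x => N ≤ x ∧ x % p < h), f x)
      * ∏ x ∈ A.filter (fun x => x < N ∧ x % p < h), f x := by
    unfold Q
    rw [← Finset.prod_filter_mul_prod_filter_not _ (fun x => N ≤ x)]
    simp only [Finset.filter_filter]
    congr 1
    · apply Finset.prod_congr _ (fun _ _ => rfl)
      apply Finset.filter_congr; intro x _; omega
    · apply Finset.prod_congr _ (fun _ _ => rfl)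
      apply Finset.filter_congr; intro x _; omega
  have hQ2 : Q p h N g (Finset.range N) = (∏ x ∈ A.filter (fun x => x < N ∧ x % p < h), f x)
      * ∏ y ∈ (Finset.range N).filter (fun y => y ∉ A ∧ y % p < h), f y := by
    unfold Q
    rw [← Finset.prod_filter_mul_prod_filter_not _ (fun x => x ∈ A)]
    simp only [Finset.filter_filter]
    congr 1
    · apply Finset.prod_congr _ (fun _ _ => rfl)
      ext x; simp only [Finset.mem_filter, Finset.mem_range]; tauto
    · apply Finset.prod_congr _ (fun _ _ => rfl)
      apply Finset.filter_congr; intro x _; tauto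
  rw [hP, hQ, hQ2, hgt]
  generalize (∏ x ∈ A.filter (fun x => x < N ∧ x % p < h), f x) = w
  have hw := Int.units_mul_self w
  congr 1
  generalize (∏ x ∈ A.filter (fun x => N ≤ x ∧ x % p < h), f x) = a
  generalize ∏ y ∈ (Finset.range N).filter (fun y => y ∉ A ∧ y % p < h), f y = b
  calc a * b = a * (w * w) * b := by rw [hw, mul_one]
    _ = _ := by simp only [mul_assoc]

theorem comb {h K p : ℕ} (hp : p = 2 * h + 1) {A B C : Finset ℕ} (hA : Sym (p * K) A)
    (hC : ∀ r, cnt p r C = cnt p r A) (hcore : ∀ x, x + p ∈ C → x ∈ C)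
    (hB : ∀ r < p, cnt p r B = K)
    (hpad : ∀ r < p, ∃ d e, padBeta (runnerSet p r A) d = padBeta (runnerSet p r B) e) :
    Sym (p * K) B ∧ Sym (p * K) C ∧ ∀ (g : ℤ → ℤˣ) (ε : ℤˣ), (∀ b, g (-1 - b) = g b) →
      (∀ b, ¬ (p : ℤ) ∣ 2 * b + 1 → g (b + p) = ε * g b) →
      P (p * K) g A * P (p * K) g B = P (p * K) g C := by
  have hp0 : 0 < p := by omega
  -- runners of A
  have hAr : ∀ r < p, ∀ z : ℤ, ext (runnerSet p r A) z
      ↔ ¬ ext (runnerSet p (p - 1 - r) A) (2 * K - 1 - z) := by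
    intro r hr z
    rw [ext_runner hr, ext_runner (by omega), hA]
    have : 2 * ((p * K : ℕ) : ℤ) - 1 - (p * z + r) = p * (2 * K - 1 - z) + (p - 1 - r : ℕ) := by
      have : ((p - 1 - r : ℕ) : ℤ) = p - 1 - r := by omega
      rw [this]; push_cast; ring
    rw [this]
  have hsymof : ∀ D : Finset ℕ, (∀ r < p, ∀ z : ℤ, ext (runnerSet p r D) z
      ↔ ¬ ext (runnerSet p (p - 1 - r) D) (2 * K - 1 - z)) → Sym (p * K) D := by
    intro D hD z
    have hpz : (0 : ℤ) < p := by exact_mod_cast hp0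
    obtain ⟨r, hr⟩ : ∃ r : ℕ, (r : ℤ) = z % p :=
      ⟨(z % p).toNat, by have := Int.emod_nonneg z hpz.ne'; omega⟩
    have hrp : r < p := by have := Int.emod_lt_of_pos z hpz; omega
    have hz : z = p * (z / p) + r := by rw [hr]; exact (Int.mul_ediv_add_emod z p).symm
    have := hD r hrp (z / p)
    rw [ext_runner hrp, ext_runner (by omega)] at this
    have e : 2 * ((p * K : ℕ) : ℤ) - 1 - z = p * (2 * K - 1 - z / p) + (p - 1 - r : ℕ) := by
      have : ((p - 1 - r : ℕ) : ℤ) = p - 1 - r := by omega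
      rw [this]
      push_cast
      linear_combination -hz
    rw [e, ← this, ← hz]
  have hn : ∀ r < p, cnt p r A + cnt p (p - 1 - r) A = 2 * K := by
    intro r hr
    have hlt : ∀ s < p, ∀ k ∈ runnerSet p s A, k < 2 * K := by
      intro s hs k hk
      by_contra hc
      exact (hAr s hs k).1 (ext_nat.2 hk) (ext_neg (by omega))
    have hd : Disjoint (runnerSet p r A) ((runnerSet p (p-1-r) A).image fun k => 2 * K - 1 - k) := by
      rw [Finset.disjoint_left]
      intro k hk hk2
      obtain ⟨w, hw, rfl⟩ := Finset.mem_image.1 hk2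
      have h1 := hlt _ (by omega) w hw
      have h2 := (hAr r hr _).1 (ext_nat.2 hk)
      apply h2
      have e : (2 * K - 1 - ((2 * K - 1 - w : ℕ) : ℤ)) = w := by omega
      rw [e, ext_nat]; exact hw
    have hu : runnerSet p r A ∪ ((runnerSet p (p-1-r) A).image fun k => 2 * K - 1 - k)
        = Finset.range (2 * K) := by
      ext k
      simp only [Finset.mem_union, Finset.mem_image, Finset.mem_range]
      constructor
      · rintro (h1 | ⟨w, hw, rfl⟩)
        · exact hlt r hr k h1
        · have := hlt _ (by omega) w hw
          omega
      · intro hk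
        by_cases h1 : k ∈ runnerSet p r A
        · exact Or.inl h1
        · right
          have h2 := hAr r hr k
          rw [ext_nat] at h2
          have h3 := not_not.1 (mt h2.2 h1)
          have e : (2 * K - 1 - (k : ℤ)) = ((2 * K - 1 - k : ℕ) : ℤ) := by omega
          rw [e, ext_nat] at h3
          exact ⟨_, h3, by omega⟩
    rw [← card_runner, ← card_runner]
    have h3 := Finset.card_union_of_disjoint hd
    rw [hu, Finset.card_range, Finset.card_image_of_injOn] at h3
    · exact h3.symm
    · intro a ha b hb hab
      have := hlt _ (by omega) a ha
      have := hlt _ (by omega) b hb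
      simp only at hab; omega
  -- runners of C
  have hCr : ∀ r < p, runnerSet p r C = Finset.range (cnt p r A) := by
    intro r hr
    have hdown : ∀ k, k + 1 ∈ runnerSet p r C → k ∈ runnerSet p r C := by
      intro k
      rw [mem_runner hr, mem_runner hr]
      intro hk
      apply hcore
      have : p * k + r + p = p * (k + 1) + r := by ring
      rwa [this]
    have hdown2 : ∀ j k, k + j ∈ runnerSet p r C → k ∈ runnerSet p r C := by
      intro j
      induction j with
      | zero => intro k hk; exact hk
      | succ j ih => intro k hk; exact ih k (hdown _ hk)
    have hsub : runnerSet p r C ⊆ Finset.range (cnt p r A) := by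
      intro k hk
      rw [Finset.mem_range, ← hC, ← card_runner]
      have : Finset.range (k + 1) ⊆ runnerSet p r C := by
        intro j hj
        rw [Finset.mem_range] at hj
        apply hdown2 (k - j)
        have : j + (k - j) = k := by omega
        rwa [this]
      have := Finset.card_le_card this
      rw [Finset.card_range] at this
      omega
    apply Finset.eq_of_subset_of_card_le hsub
    rw [card_runner, hC, Finset.card_range]
  have hextr : ∀ (n : ℕ) (z : ℤ), ext (Finset.range n) z ↔ z < n := by
    intro n z
    unfold ext
    rw [Finset.mem_range]
    omega
  have hSC : Sym (p * K) C := by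
    apply hsymof
    intro r hr z
    rw [hCr r hr, hCr _ (by omega), hextr, hextr]
    have := hn r hr
    omega
  have hSB : Sym (p * K) B := by
    apply hsymof
    intro r hr z
    obtain ⟨d, e, hde⟩ := hpad r hr
    obtain ⟨d', e', hde'⟩ := hpad (p - 1 - r) (by omega)
    have c1 : cnt p r A + d = K + e := by
      rw [← hB r hr, ← card_runner, ← card_runner, ← card_pad, ← card_pad, hde]
    have c2 : cnt p (p - 1 - r) A + d' = K + e' := by
      rw [← hB (p - 1 - r) (by omega), ← card_runner, ← card_runner, ← card_pad, ← card_pad, hde']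
    have c3 := hn r hr
    rw [ext_pad hde.symm, ext_pad hde'.symm, hAr r hr]
    have : 2 * (K : ℤ) - 1 - (z + e - d) = 2 * K - 1 - z + e' - d' := by omega
    rw [this]
  refine ⟨hSB, hSC, ?_⟩
  intro g ε hg1 hg2
  rw [P_eq hg1 hp hA, P_eq hg1 hp hSB, P_eq hg1 hp hSC]
  have hh : cnt p h A = K := by
    have := hn h (by omega)
    have e : p - 1 - h = h := by omega
    rw [e] at this; omega
  have hmid : ∏ x ∈ A.filter (fun x => p * K ≤ x ∧ x % p = h), g ((x : ℤ) - (p * K : ℕ))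
      = ∏ x ∈ B.filter (fun x => p * K ≤ x ∧ x % p = h), g ((x : ℤ) - (p * K : ℕ)) := by
    apply Finset.prod_congr _ (fun _ _ => rfl)
    obtain ⟨d, e, hde⟩ := hpad h (by omega)
    have c1 : cnt p h A + d = K + e := by
      rw [← hB h (by omega), ← card_runner, ← card_runner, ← card_pad, ← card_pad, hde]
    have c2 : d = e := by omega
    ext x
    simp only [Finset.mem_filter]
    apply and_congr_left
    rintro ⟨_, hx⟩
    have h1 := ext_pad hde ((x / p : ℕ) : ℤ)
    rw [c2, add_sub_cancel_right, ext_nat, ext_nat, mem_runner (by omega), mem_runner (by omega),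
      ← hx, Nat.div_add_mod] at h1
    exact h1
  have hmidC : ∏ x ∈ C.filter (fun x => p * K ≤ x ∧ x % p = h), g ((x : ℤ) - (p * K : ℕ)) = 1 := by
    have : C.filter (fun x => p * K ≤ x ∧ x % p = h) = ∅ := by
      rw [Finset.filter_eq_empty_iff]
      rintro x hx ⟨h1, h2⟩
      have h3 : x / p ∈ runnerSet p h C := by
        rw [mem_runner (by omega), ← h2, Nat.div_add_mod]; exact hx
      rw [hCr h (by omega), hh, Finset.mem_range, Nat.div_lt_iff_lt_mul hp0] at h3
      linarith
    rw [this, Finset.prod_empty]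
  have hQ : Q p h (p * K) g A * Q p h (p * K) g B
      = Q p h (p * K) g C * Q p h (p * K) g (Finset.range (p * K)) := by
    simp only [Q_eq, ← Finset.prod_mul_distrib]
    apply Finset.prod_congr rfl
    intro r hr
    rw [Finset.mem_range] at hr
    have hrp : r < p := by omega
    obtain ⟨d, e, hde⟩ := hpad r hrp
    have hG : ∀ k : ℕ, g (((p * (k + 1) + r : ℕ) : ℤ) - (p * K : ℕ))
        = ε * g (((p * k + r : ℕ) : ℤ) - (p * K : ℕ)) := by
      intro k
      rw [← hg2]
      · congr 1; push_cast; ring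
      · intro hdvd
        have e1 : 2 * (((p * k + r : ℕ) : ℤ) - (p * K : ℕ)) + 1
            = p * (2 * k - 2 * K) + (2 * r + 1 : ℕ) := by push_cast; ring
        rw [e1] at hdvd
        have := (Int.dvd_add_right (dvd_mul_right _ _)).1 hdvd
        have := Int.natCast_dvd_natCast.1 this
        have := Nat.le_of_dvd (by omega) this
        omega
    have := runner_prod (G := fun k : ℕ => g (((p * k + r : ℕ) : ℤ) - (p * K : ℕ))) hG hde
    rw [this, hCr r hrp, card_runner, card_runner, hB r hrp]
    congr 2
    ext k
    rw [mem_runner hrp, Finset.mem_range, Finset.mem_range]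
    constructor
    · intro hk
      have : p * k + p ≤ p * K := by
        rw [← Nat.mul_succ]; exact Nat.mul_le_mul_left _ hk
      omega
    · intro hk
      by_contra hc
      have := Nat.mul_le_mul_left p (not_lt.1 hc)
      omega
  rw [hmid, hmidC, mul_one, ← hQ]
  generalize (∏ x ∈ B.filter (fun x => p * K ≤ x ∧ x % p = h), g ((x : ℤ) - (p * K : ℕ))) = v
  generalize Q p h (p * K) g (Finset.range (p * K)) = w
  generalize Q p h (p * K) g A = a
  generalize Q p h (p * K) g B = b
  have hw := Int.units_mul_self w
  have hv := Int.units_mul_self v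
  calc a * w * v * (b * w * v) = a * b * (w * w) * (v * v) := by
        simp only [mul_comm, mul_left_comm]
    _ = _ := by rw [hw, hv]; simp

end LW
namespace LW

/-- `s` describes the action of `σ` on the square roots of `D`. -/
def HasSign (σ : Qbar ≃ₐ[ℚ] Qbar) (D s : ℤ) : Prop :=
  ∀ α : Qbar, α ^ 2 = (D : Qbar) → σ α = (s : Qbar) * α

lemma exists_sqrt (D : ℤ) : ∃ α : Qbar, α ^ 2 = (D : Qbar) :=
  IsAlgClosed.exists_pow_nat_eq _ (by norm_num)

lemma hasSign_of {σ : Qbar ≃ₐ[ℚ] Qbar} {D s : ℤ} {α : Qbar} (h : α ^ 2 = (D : Qbar))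
    (h2 : σ α = (s : Qbar) * α) : HasSign σ D s := by
  intro β hβ
  rcases sq_eq_sq_iff_eq_or_eq_neg.1 (hβ.trans h.symm) with rfl | rfl
  · exact h2
  · rw [map_neg, h2]; ring

lemma exists_sign (σ : Qbar ≃ₐ[ℚ] Qbar) (D : ℤ) : ∃ s : ℤˣ, HasSign σ D s := by
  obtain ⟨α, hα⟩ := exists_sqrt D
  have h : (σ α) ^ 2 = α ^ 2 := by rw [← map_pow, hα]; simp
  rcases sq_eq_sq_iff_eq_or_eq_neg.1 h with h | h
  · exact ⟨1, hasSign_of hα (by simpa using h)⟩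
  · exact ⟨-1, hasSign_of hα (by simpa using h)⟩

lemma HasSign.mul {σ : Qbar ≃ₐ[ℚ] Qbar} {D E s t : ℤ} (h1 : HasSign σ D s)
    (h2 : HasSign σ E t) : HasSign σ (D * E) (s * t) := by
  obtain ⟨α, hα⟩ := exists_sqrt D
  obtain ⟨β, hβ⟩ := exists_sqrt E
  apply hasSign_of (α := α * β)
  · rw [mul_pow, hα, hβ]; push_cast; ring
  · rw [map_mul, h1 α hα, h2 β hβ]; push_cast; ring

lemma HasSign.uniq {σ : Qbar ≃ₐ[ℚ] Qbar} {D s t : ℤ} (hD : D ≠ 0) (h1 : HasSign σ D s)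
    (h2 : HasSign σ D t) : s = t := by
  obtain ⟨α, hα⟩ := exists_sqrt D
  have h0 : α ≠ 0 := by
    rintro rfl
    apply hD
    have : (D : Qbar) = 0 := by rw [← hα]; ring
    exact_mod_cast this
  have := (h1 α hα).symm.trans (h2 α hα)
  have := mul_right_cancel₀ h0 this
  exact_mod_cast this

lemma hasSign_one (σ : Qbar ≃ₐ[ℚ] Qbar) : HasSign σ 1 1 :=
  hasSign_of (α := 1) (by simp) (by simp)

lemma hasSign_prod {σ : Qbar ≃ₐ[ℚ] Qbar} (S : Finset ℕ) (D : ℕ → ℤ) (s : ℕ → ℤˣ)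
    (h : ∀ x ∈ S, HasSign σ (D x) (s x)) :
    HasSign σ (∏ x ∈ S, D x) ((∏ x ∈ S, s x : ℤˣ) : ℤ) := by
  induction S using Finset.induction_on with
  | empty => simpa using hasSign_one σ
  | insert a S ha ih =>
    rw [Finset.prod_insert ha, Finset.prod_insert ha, Units.val_mul]
    exact (h a (by simp)).mul (ih fun x hx => h x (by simp [hx]))

/-- Gauss sums. -/
lemma gauss {σ : Qbar ≃ₐ[ℚ] Qbar} {q e : ℕ} [Fact q.Prime] (hq : q ≠ 2)
    (hσ : ∀ ζ : Qbar, ζ ^ q = 1 → σ ζ = ζ ^ e) (he : ¬ q ∣ e) :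
    HasSign σ (legendreSym q (-1) * q) (legendreSym q e) := by
  have hq0 : q ≠ 0 := (Fact.out : q.Prime).ne_zero
  haveI : NeZero q := ⟨hq0⟩
  haveI : NeZero (q : Qbar) := ⟨by exact_mod_cast hq0⟩
  obtain ⟨ζ, hζ⟩ := HasEnoughRootsOfUnity.exists_primitiveRoot Qbar q
  set χ : MulChar (ZMod q) Qbar := (quadraticChar (ZMod q)).ringHomComp (Int.castRingHom Qbar)
    with hχ
  set ψ := AddChar.zmodChar q ((IsPrimitiveRoot.iff_def ζ q).mp hζ).left with hψ
  have hψp : ψ.IsPrimitive := AddChar.zmodChar_primitive_of_primitive_root q hζ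
  have hquad : χ.IsQuadratic := (quadraticChar_isQuadratic (ZMod q)).comp _
  have hne : χ ≠ 1 := by
    rw [hχ]
    refine (MulChar.ringHomComp_ne_one_iff (RingHom.injective_int _)).mpr
      (quadraticChar_ne_one ?_)
    rw [ZMod.ringChar_zmod_n]; exact hq
  have hsq := gaussSum_sq hne hquad hψp
  have hval : ∀ a, χ a = ((quadraticChar (ZMod q) a : ℤ) : Qbar) := fun a => rfl
  have hcop : Nat.Coprime e q :=
    ((Nat.Prime.coprime_iff_not_dvd (Fact.out : q.Prime)).2 he).symm
  set u : (ZMod q)ˣ := ZMod.unitOfCoprime e hcop with hu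
  have hue : (u : ZMod q) = (e : ZMod q) := ZMod.coe_unitOfCoprime e hcop
  apply hasSign_of (α := gaussSum χ ψ)
  · rw [hsq, hval, ZMod.card]
    simp [legendreSym]
  · have h1 : σ (gaussSum χ ψ) = gaussSum χ (ψ.mulShift u) := by
      unfold gaussSum
      rw [map_sum]
      apply Finset.sum_congr rfl
      intro a _
      rw [map_mul, hval, map_intCast, AddChar.mulShift_apply, hue]
      congr 1
      rw [hσ]
      · rw [← AddChar.map_nsmul_eq_pow, nsmul_eq_mul]
      · rw [← AddChar.map_nsmul_eq_pow, nsmul_eq_mul]; simp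
    rw [h1, gaussSum_mulShift_eq, hquad.inv, hval, hue]
    simp [legendreSym]

lemma neg_one_sign {σ : Qbar ≃ₐ[ℚ] Qbar} {e : ℕ} (he : e % 2 = 1)
    (hσ : ∀ ζ : Qbar, ζ ^ 4 = 1 → σ ζ = ζ ^ e) : HasSign σ (-1) (ZMod.χ₄ e) := by
  obtain ⟨α, hα⟩ := exists_sqrt (-1)
  apply hasSign_of hα
  have hα' : α ^ 2 = -1 := by simpa using hα
  rw [hσ α (by rw [show (4 : ℕ) = 2 * 2 by rfl, pow_mul, hα']; norm_num), ZMod.χ₄_eq_neg_one_pow he]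
  conv_lhs => rw [← Nat.div_add_mod e 2, he, pow_succ, pow_mul, hα']
  push_cast; ring

lemma sign_of_primes {σ : Qbar ≃ₐ[ℚ] Qbar} {p : ℕ} (L : ℤ → ℤ)
    (hL1 : L 1 = 1) (hLm : ∀ a b, L (a * b) = L a * L b) (hneg : HasSign σ (-1) (L (-1)))
    (hq : ∀ q : ℕ, q.Prime → q ≠ 2 → q ≠ p → HasSign σ q (L q)) (hp : p.Prime)
    (D : ℤ) (hD : D % 2 = 1) (hDp : ¬ (p : ℤ) ∣ D) : HasSign σ D (L D) := by
  have hnat : ∀ n : ℕ, n % 2 = 1 → ¬ p ∣ n → HasSign σ n (L n) := by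
    intro n
    induction n using induction_on_primes with
    | zero => intro h; omega
    | one => intro _ _; simpa [hL1] using hasSign_one σ
    | prime_mul q a hqp ih =>
      intro h1 h2
      have ha : a % 2 = 1 := by
        by_contra hc
        have : (q * a) % 2 = 0 := by rw [Nat.mul_mod, show a % 2 = 0 by omega]; simp
        omega
      have hq2 : q ≠ 2 := by rintro rfl; omega
      have hqne : q ≠ p := by rintro rfl; exact h2 (dvd_mul_right _ _)
      push_cast
      rw [hLm]
      exact (hq q hqp hq2 hqne).mul (ih ha fun h => h2 (h.mul_left _))
  rcases Int.natAbs_eq D with h | h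
  · rw [h]
    apply hnat
    · omega
    · rwa [← Int.natCast_dvd]
  · rw [h, neg_eq_neg_one_mul, hLm]
    refine hneg.mul (hnat _ (by omega) ?_)
    rwa [← Int.natCast_dvd]

lemma sign_case_fix {σ : Qbar ≃ₐ[ℚ] Qbar} {p : ℕ} (hp : p.Prime) (hp2 : p % 2 = 1)
    (hσ : ∀ (ζ : Qbar) (n : ℕ), 0 < n → Nat.Coprime n p → ζ ^ n = 1 → σ ζ = ζ)
    (D : ℤ) (hD : D % 2 = 1) (hDp : ¬ (p : ℤ) ∣ D) : HasSign σ D 1 := by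
  have h2p : Nat.Coprime 2 p := (Nat.coprime_primes Nat.prime_two hp).2 (by omega)
  have hneg : HasSign σ (-1) 1 := by
    have := neg_one_sign (σ := σ) (e := 1) rfl (fun ζ hζ => by
      rw [pow_one]; exact hσ ζ 4 (by norm_num) (Nat.Coprime.pow_left 2 h2p) hζ)
    simpa using this
  refine sign_of_primes (fun _ => 1) rfl (fun _ _ => rfl) hneg ?_ hp D hD hDp
  intro q hq hq2 hqp
  haveI : Fact q.Prime := ⟨hq⟩
  have h1 := gauss (σ := σ) (q := q) (e := 1) hq2 (fun ζ hζ => by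
    rw [pow_one]; exact hσ ζ q hq.pos ((Nat.coprime_primes hq hp).2 hqp) hζ)
    (by simpa using hq.one_lt.ne')
  rw [Nat.cast_one, legendreSym.at_one] at h1
  rcases legendreSym.eq_one_or_neg_one q (a := -1) (by simp) with h | h
  · rw [h] at h1; simpa using h1
  · rw [h] at h1
    have := hneg.mul h1
    simpa using this

lemma sign_case_frob {σ : Qbar ≃ₐ[ℚ] Qbar} {p : ℕ} [Fact p.Prime] (hp2 : p % 2 = 1)
    (hσ : ∀ (ζ : Qbar) (n : ℕ), 0 < n → Nat.Coprime n p → ζ ^ n = 1 → σ ζ = ζ ^ p)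
    (D : ℤ) (hD : D % 2 = 1) (hDp : ¬ (p : ℤ) ∣ D) : HasSign σ D (legendreSym p D) := by
  have hp : p.Prime := Fact.out
  have hpn2 : p ≠ 2 := by omega
  have h2p : Nat.Coprime 2 p := (Nat.coprime_primes Nat.prime_two hp).2 (by omega)
  have hneg : HasSign σ (-1) (ZMod.χ₄ p) := neg_one_sign hp2 (fun ζ hζ => 
      hσ ζ 4 (by norm_num) (Nat.Coprime.pow_left 2 h2p) hζ)
  refine sign_of_primes (legendreSym p) (by simp) (legendreSym.mul p)
    (by rw [legendreSym.at_neg_one hpn2]; exact hneg) ?_ hp D hD hDp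
  intro q hq hq2 hqp
  haveI : Fact q.Prime := ⟨hq⟩
  have h1 := gauss (σ := σ) (q := q) (e := p) hq2 (fun ζ hζ => 
    hσ ζ q hq.pos ((Nat.coprime_primes hq hp).2 hqp) hζ)
    (by rw [Nat.prime_dvd_prime_iff_eq hq hp]; exact hqp)
  rw [legendreSym.at_neg_one hq2] at h1
  have hqo : q % 2 = 1 := hq.eq_two_or_odd.resolve_left hq2
  rcases (by omega : q % 4 = 1 ∨ q % 4 = 3) with h | h
  · rw [ZMod.χ₄_nat_one_mod_four h, one_mul] at h1
    rwa [legendreSym.quadratic_reciprocity_one_mod_four h hpn2]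
  · rw [ZMod.χ₄_nat_three_mod_four h] at h1
    have h2 := hneg.mul h1
    rw [show (-1 : ℤ) * (-1 * (q : ℤ)) = q by ring] at h2
    rcases (by omega : p % 4 = 1 ∨ p % 4 = 3) with h' | h'
    · rw [ZMod.χ₄_nat_one_mod_four h', one_mul] at h2
      rwa [← legendreSym.quadratic_reciprocity_one_mod_four h' hq2]
    · rw [ZMod.χ₄_nat_three_mod_four h', neg_one_mul] at h2
      rw [legendreSym.quadratic_reciprocity_three_mod_four h h']
      exact h2

/-- The signed diagonal hook length. -/
def Dd (b : ℤ) : ℤ := if b % 2 = 0 then 2 * b + 1 else -(2 * b + 1)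

lemma Dd_nat (a : ℕ) : Dd a = (-1) ^ a * (2 * a + 1) := by
  unfold Dd
  rcases Nat.even_or_odd a with h | h
  · rw [h.neg_one_pow, if_pos (by have := Nat.even_iff.1 h; omega)]; ring
  · rw [h.neg_one_pow, if_neg (by have := Nat.odd_iff.1 h; omega)]; ring

lemma card_eq_sum_row {l : YoungDiagram} {N : ℕ} (hc : l.colLen 0 ≤ N) :
    l.cells.card = ∑ i ∈ Finset.range N, l.rowLen i := by
  rw [Finset.card_eq_sum_card_fiberwise (f := Prod.fst) (t := Finset.range N)]
  · apply Finset.sum_congr rfl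
    intro i _
    rw [YoungDiagram.rowLen_eq_card]; rfl
  · rintro ⟨i, j⟩ h
    have := fst_lt (i := i) (j := j) hc (by simpa using h)
    simpa using this

lemma card_eq {l : YoungDiagram} {N : ℕ} (hc : l.colLen 0 ≤ N) (hs : Sym N (betaSet l N)) :
    l.cells.card = ∑ x ∈ (betaSet l N).filter (fun x => N ≤ x), (2 * (x - N) + 1) := by
  set B := betaSet l N with hB
  have h1 : ∑ x ∈ B, x = l.cells.card + ∑ x ∈ Finset.range N, x := by
    rw [card_eq_sum_row hc, hB]
    unfold betaSet
    rw [Finset.sum_image (beta_injOn l N), Finset.sum_add_distrib,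
      Finset.sum_range_reflect (fun x => x)]
  have h2 : ∑ x ∈ B, x = ∑ x ∈ B.filter (fun x => N ≤ x), x + ∑ x ∈ B.filter (fun x => ¬ N ≤ x), x :=
    (Finset.sum_filter_add_sum_filter_not _ _ _).symm
  have h3 : ∑ x ∈ Finset.range N, x = ∑ x ∈ (Finset.range N).filter (fun x => x ∈ B), x
      + ∑ x ∈ (Finset.range N).filter (fun x => ¬ x ∈ B), x :=
    (Finset.sum_filter_add_sum_filter_not _ _ _).symm
  have h4 : (Finset.range N).filter (fun x => x ∈ B) = B.filter (fun x => ¬ N ≤ x) := by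
    ext x; simp only [Finset.mem_filter, Finset.mem_range, not_le]; tauto
  have h5 : ∑ x ∈ (Finset.range N).filter (fun x => ¬ x ∈ B), x
      = ∑ x ∈ B.filter (fun x => N ≤ x), (2 * N - 1 - x) := by
    symm
    apply Finset.sum_nbij' (fun x => 2 * N - 1 - x) (fun x => 2 * N - 1 - x)
    · intro x hx
      simp only [Finset.mem_filter, Finset.mem_range] at hx ⊢
      have h1 := hs.lt hx.1
      exact ⟨by omega, (hs.mem h1).1 hx.1⟩
    · intro y hy
      simp only [Finset.mem_filter, Finset.mem_range] at hy ⊢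
      have h1 : y < 2 * N := by omega
      exact ⟨not_not.1 (mt (hs.mem h1).2 hy.2), by omega⟩
    · intro x hx
      simp only [Finset.mem_filter] at hx
      have h1 := hs.lt hx.1
      omega
    · intro y hy
      simp only [Finset.mem_filter, Finset.mem_range] at hy
      omega
    · intro x _; rfl
  have h6 : ∑ x ∈ B.filter (fun x => N ≤ x), x = ∑ x ∈ B.filter (fun x => N ≤ x), (2 * N - 1 - x)
      + ∑ x ∈ B.filter (fun x => N ≤ x), (2 * (x - N) + 1) := by
    rw [← Finset.sum_add_distrib]
    apply Finset.sum_congr rfl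
    intro x hx
    simp only [Finset.mem_filter] at hx
    have h1 := hs.lt hx.1
    omega
  rw [h4] at h3
  omega

lemma disc_eq {l : YoungDiagram} {N : ℕ} (hc : l.colLen 0 ≤ N) (hs : Sym N (betaSet l N)) :
    selfConjDisc l = ∏ x ∈ (betaSet l N).filter (fun x => N ≤ x), Dd ((x : ℤ) - N) := by
  have hsc := sc_of_sym hc hs
  have hrc : ∀ i, l.colLen i = l.rowLen i := fun i => by
    conv_rhs => rw [← hsc, YoungDiagram.rowLen_transpose]
  set I := (Finset.range N).filter (fun i => i < l.rowLen i) with hI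
  have hd : l.cells.filter (fun c => c.1 = c.2) = I.image (fun i => (i, i)) := by
    ext ⟨i, j⟩
    simp only [hI, Finset.mem_filter, YoungDiagram.mem_cells, Finset.mem_image, Finset.mem_range,
      Prod.mk.injEq]
    constructor
    · rintro ⟨h1, rfl⟩
      exact ⟨i, ⟨fst_lt hc h1, YoungDiagram.mem_iff_lt_rowLen.1 h1⟩, rfl, rfl⟩
    · rintro ⟨k, ⟨_, h1⟩, rfl, rfl⟩
      exact ⟨YoungDiagram.mem_iff_lt_rowLen.2 h1, rfl⟩
  have hinj : Function.Injective (fun i : ℕ => (i, i)) := fun a b h => congrArg Prod.fst h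
  have hB : (betaSet l N).filter (fun x => N ≤ x) = I.image (fun i => l.rowLen i + (N - 1 - i)) := by
    unfold betaSet
    rw [Finset.filter_image]
    congr 1
    rw [hI]
    apply Finset.filter_congr
    intro i hi
    rw [Finset.mem_range] at hi
    omega
  have hinjI : Set.InjOn (fun i => l.rowLen i + (N - 1 - i)) (I : Finset ℕ) :=
    (beta_injOn l N).mono (Finset.coe_subset.2 (Finset.filter_subset _ _))
  have hdur : durfee l = ((betaSet l N).filter (fun x => N ≤ x)).card := by
    unfold durfee
    rw [hd, hB, Finset.card_image_of_injective _ hinj, Finset.card_image_of_injOn hinjI]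
  have hprod : diagHookProd l
      = ∏ x ∈ (betaSet l N).filter (fun x => N ≤ x), (2 * ((x - N : ℕ) : ℤ) + 1) := by
    unfold diagHookProd
    rw [hd, hB, Finset.prod_image hinj.injOn, Finset.prod_image hinjI]
    apply Finset.prod_congr rfl
    intro i hi
    rw [hI, Finset.mem_filter, Finset.mem_range] at hi
    rw [hrc]
    simp only
    omega
  have hexp : (l.cells.card - durfee l) / 2
      = ∑ x ∈ (betaSet l N).filter (fun x => N ≤ x), (x - N) := by
    rw [card_eq hc hs, hdur, Finset.sum_add_distrib, ← Finset.mul_sum]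
    simp
  unfold selfConjDisc
  rw [hexp, hprod, ← Finset.prod_pow_eq_pow_sum, ← Finset.prod_mul_distrib]
  apply Finset.prod_congr rfl
  intro x hx
  rw [Finset.mem_filter] at hx
  rw [← Dd_nat, Nat.cast_sub hx.2]

lemma Dd_odd (b : ℤ) : Dd b % 2 = 1 := by unfold Dd; split_ifs <;> omega

lemma Dd_refl (b : ℤ) : Dd (-1 - b) = Dd b := by unfold Dd; split_ifs <;> omega

lemma Dd_add {p : ℕ} (hp : p % 2 = 1) (b : ℤ) : (p : ℤ) ∣ Dd (b + p) + Dd b := by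
  unfold Dd
  split_ifs
  · omega
  · exact ⟨2, by ring⟩
  · exact ⟨-2, by ring⟩
  · omega

lemma Dd_dvd {p : ℤ} {b : ℤ} : p ∣ Dd b ↔ p ∣ 2 * b + 1 := by
  unfold Dd; split_ifs
  · rfl
  · exact dvd_neg

lemma disc_sign {σ : Qbar ≃ₐ[ℚ] Qbar} {g : ℤ → ℤˣ} (hg : ∀ b, HasSign σ (Dd b) (g b))
    {l : YoungDiagram} {N : ℕ} (hc : l.colLen 0 ≤ N) (hs : Sym N (betaSet l N)) {τ : ℤ}
    (hτ : HasSign σ (selfConjDisc l) τ) : τ = (P N g (betaSet l N) : ℤˣ) := by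
  have hne : selfConjDisc l ≠ 0 := by
    rw [disc_eq hc hs, Finset.prod_ne_zero_iff]
    intro x _ h
    have := Dd_odd ((x : ℤ) - N)
    omega
  apply hτ.uniq hne
  rw [disc_eq hc hs]
  exact hasSign_prod _ _ _ (fun x _ => hg _)

end LW
/-- Let `p` be an odd prime, `λ` a self-conjugate partition with `p`-core
`κ` and `p`-cocore `μ`, and `σ` an automorphism of `ℚ̄` over `ℚ` that either is of
`σ_p`-type or fixes every root of unity of order coprime to `p`. Then
`τ(λ,σ) = τ(κ,σ)·τ(μ,σ)`. -/
theorem tau_selfConj_littlewood (p : ℕ) (hp : p.Prime) (hpodd : Odd p)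
    (l κ μ : YoungDiagram) (hsc : l.transpose = l)
    (hκ : IsPCoreOf p l κ) (hμ : IsPCocoreOf p l μ)
    (σ : Qbar ≃ₐ[ℚ] Qbar)
    (hσ : IsSigmaPType p σ ∨
      (∀ (ζ : Qbar) (n : ℕ), 0 < n → Nat.Coprime n p → ζ ^ n = 1 → σ ζ = ζ))
    (τl τκ τμ : ℤ)
    (hτl : ∀ α : Qbar, α ^ 2 = (selfConjDisc l : Qbar) → σ α = (τl : Qbar) * α)
    (hτκ : ∀ α : Qbar, α ^ 2 = (selfConjDisc κ : Qbar) → σ α = (τκ : Qbar) * α)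
    (hτμ : ∀ α : Qbar, α ^ 2 = (selfConjDisc μ : Qbar) → σ α = (τμ : Qbar) * α) :
    τl = τκ * τμ := by
  obtain ⟨hcoreκ, hpc⟩ := hκ
  obtain ⟨hempty, N, hlN, hμN, ⟨K, rfl⟩, hpad⟩ := hμ
  haveI : Fact p.Prime := ⟨hp⟩
  have hp0 : 0 < p := hp.pos
  obtain ⟨h, hh⟩ := hpodd
  have hp2 : p % 2 = 1 := by omega
  obtain ⟨hκN, hκcnt⟩ := LW.rim_cnt hp0 hlN hcoreκ
  obtain ⟨-, hμcnt⟩ := LW.rim_cnt hp0 hμN hempty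
  have hB : ∀ r < p, LW.cnt p r (betaSet μ (p * K)) = K := by
    intro r hr
    rw [← hμcnt r, LW.beta_bot, ← LW.card_runner]
    have : runnerSet p r (Finset.range (p * K)) = Finset.range K := by
      ext k
      rw [LW.mem_runner hr, Finset.mem_range, Finset.mem_range]
      constructor
      · intro hk
        by_contra hc
        have := Nat.mul_le_mul_left p (not_lt.1 hc)
        omega
      · intro hk
        have : p * k + p ≤ p * K := by
          rw [← Nat.mul_succ]; exact Nat.mul_le_mul_left _ hk
        omega
    rw [this, Finset.card_range]
  have hSl := LW.sym_of_sc hlN hsc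
  obtain ⟨hSμ, hSκ, hmain⟩ := LW.comb hh hSl hκcnt
    (fun x hx => LW.core_beta hκN hpc hp0 hx) hB hpad
  choose g hg using fun b : ℤ => LW.exists_sign σ (LW.Dd b)
  have hne : ∀ b, LW.Dd b ≠ 0 := fun b hb => by have := LW.Dd_odd b; omega
  have hg1 : ∀ b, g (-1 - b) = g b := by
    intro b
    have h1 := hg (-1 - b)
    rw [LW.Dd_refl] at h1
    exact Units.ext (h1.uniq (hne b) (hg b))
  have hg2 : ∃ ε : ℤˣ, ∀ b, ¬ (p : ℤ) ∣ 2 * b + 1 → g (b + p) = ε * g b := by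
    have hdv : ∀ b : ℤ, ¬ (p : ℤ) ∣ 2 * b + 1 → ¬ (p : ℤ) ∣ LW.Dd b ∧ ¬ (p : ℤ) ∣ LW.Dd (b + p) := by
      intro b hb
      have h1 : ¬ (p : ℤ) ∣ LW.Dd b := by rwa [LW.Dd_dvd]
      exact ⟨h1, fun h2 => h1 ((Int.dvd_add_right h2).1 (LW.Dd_add hp2 b))⟩
    rcases hσ with hσ | hσ
    · have hu : IsUnit (legendreSym p (-1)) := by
        rcases legendreSym.eq_one_or_neg_one p (a := -1) (by simp) with h | h <;> rw [h] <;> simp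
      refine ⟨hu.unit, fun b hb => ?_⟩
      obtain ⟨h1, h2⟩ := hdv b hb
      have e1 := (hg b).uniq (hne b) (LW.sign_case_frob hp2 hσ.1 _ (LW.Dd_odd b) h1)
      have e2 := (hg (b + p)).uniq (hne _) (LW.sign_case_frob hp2 hσ.1 _ (LW.Dd_odd _) h2)
      apply Units.ext
      rw [Units.val_mul, e1, e2, IsUnit.unit_spec, ← legendreSym.mul]
      unfold legendreSym
      congr 1
      have h3 := (ZMod.intCast_zmod_eq_zero_iff_dvd _ p).2 (LW.Dd_add hp2 b)
      push_cast at h3 ⊢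
      linear_combination h3
    · refine ⟨1, fun b hb => ?_⟩
      obtain ⟨h1, h2⟩ := hdv b hb
      have e1 := (hg b).uniq (hne b) (LW.sign_case_fix hp hp2 hσ _ (LW.Dd_odd b) h1)
      have e2 := (hg (b + p)).uniq (hne _) (LW.sign_case_fix hp hp2 hσ _ (LW.Dd_odd _) h2)
      apply Units.ext
      rw [Units.val_mul, e1, e2]; simp
  obtain ⟨ε, hε⟩ := hg2
  have hfin := hmain g ε hg1 hε
  rw [LW.disc_sign hg hlN hSl hτl, LW.disc_sign hg hκN hSκ hτκ, LW.disc_sign hg hμN hSμ hτμ,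
    ← hfin, ← Units.val_mul, mul_assoc, Int.units_mul_self, mul_one]
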